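/- Let M be a d×d matrix measure with trace measure μ = tr_M and density D = D_M (with D(t) ≥ 0 everywhere). The map F̂ : L²(M) → (L²(μ))^d induced by f ↦ √(D(·)) f(·) is a well-defined linear isometry from L²(M) onto the closed subspace L²_D = { [g] ∈ (L²(μ))^d : g(t) ∈ Ran D(t) for μ-a.e. t }. In particular, L²(M) is a Hilbert space (complete). -/

import Mathlib

open MeasureTheory Matrix Filter
open scoped ComplexOrder

/-- The squared `L²(M)`-seminorm `⟨⟨f⟩⟩_M = ∫ ⟨D t f t, f t⟩ d tr_M t` of a `ℂ^d`-valued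
function, for a matrix measure with trace measure `μ` and trace density `D`. -/
noncomputable def quadInt {Ω : Type*} [MeasurableSpace Ω] {d : ℕ}
    (μ : MeasureTheory.Measure Ω) (D : Ω → Matrix (Fin d) (Fin d) ℂ)
    (f : Ω → Fin d → ℂ) : ℝ :=
  ∫ t, (star (f t) ⬝ᵥ ((D t) *ᵥ f t)).re ∂μ

/-- Membership in `𝓛²(M)`: measurable with finite quadratic integral. -/
def MemL2M {Ω : Type*} [MeasurableSpace Ω] {d : ℕ}
    (μ : MeasureTheory.Measure Ω) (D : Ω → Matrix (Fin d) (Fin d) ℂ)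
    (f : Ω → Fin d → ℂ) : Prop :=
  Measurable f ∧ MeasureTheory.Integrable (fun t => (star (f t) ⬝ᵥ ((D t) *ᵥ f t)).re) μ

/-!
With `A = √D`, the identity `⟨D x, x⟩ = ‖A x‖²` turns `L²(M)` into the space of classes `[A f]` in
`(L²(μ))^d`. A class `[g]` with values in `Ran A` is of this form: the regularized solutions
`y_ε = (A Aᴴ + ε)⁻¹ g` of `A Aᴴ y = g` are measurable, and by the spectral theorem they converge
as `ε → 0⁺`, so that `f = Aᴴ lim y_ε` is a measurable field with `A f = g`. Ranges in finite
dimension are closed and `L²` convergence implies a.e. convergence along a subsequence, so `L²_D`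
is closed, and completeness of `(L²(μ))^d` passes to `L²(M)`.
-/

open scoped Topology

section RegularizedInverse

variable {𝕜 m n : Type*} [RCLike 𝕜] [Fintype m] [Fintype n]

theorem re_star_dotProduct_conjTranspose_mul_self_mulVec (A : Matrix m n 𝕜) (x : n → 𝕜) :
    RCLike.re (star x ⬝ᵥ ((Aᴴ * A) *ᵥ x)) = ∑ i, ‖(A *ᵥ x) i‖ ^ 2 := by
  have adjoint_move : star x ⬝ᵥ ((Aᴴ * A) *ᵥ x) = star (A *ᵥ x) ⬝ᵥ (A *ᵥ x) := by
    rw [star_mulVec, ← mulVec_mulVec, dotProduct_mulVec]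
  rw [adjoint_move, dotProduct, map_sum]
  refine Finset.sum_congr rfl fun i _ => ?_
  rw [Pi.star_apply, RCLike.star_def, RCLike.conj_mul, ← RCLike.ofReal_pow, RCLike.ofReal_re]

theorem range_mulVecLin_self_mul_conjTranspose (A : Matrix m n 𝕜) :
    LinearMap.range (A * Aᴴ).mulVecLin = LinearMap.range A.mulVecLin := by
  refine Submodule.eq_of_le_of_finrank_eq ?_ (rank_self_mul_conjTranspose A)
  rw [mulVecLin_mul]
  exact LinearMap.range_comp_le_range _ _

variable [DecidableEq n]

theorem isUnit_det_add_smul_one {P : Matrix n n 𝕜} (hP : P.PosSemidef) {ε : ℝ} (hε : 0 < ε) :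
    IsUnit (P + ε • (1 : Matrix n n 𝕜)).det :=
  (isUnit_iff_isUnit_det _).1 (PosDef.posSemidef_add hP (PosDef.one.smul hε)).isUnit

theorem inv_add_smul_one_mul_self_eq_conj_diagonal {P : Matrix n n 𝕜} (hP : P.PosSemidef) {ε : ℝ}
    (hε : 0 < ε) :
    (P + ε • (1 : Matrix n n 𝕜))⁻¹ * P =
      Unitary.conjStarAlgAut 𝕜 _ hP.isHermitian.eigenvectorUnitary
        (diagonal fun i => RCLike.ofReal
          (hP.isHermitian.eigenvalues i / (hP.isHermitian.eigenvalues i + ε))) := by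
  set Φ := Unitary.conjStarAlgAut 𝕜 (Matrix n n 𝕜) hP.isHermitian.eigenvectorUnitary
  set lam := hP.isHermitian.eigenvalues
  have hP_diag : P = Φ (diagonal fun i => RCLike.ofReal (lam i)) := hP.isHermitian.spectral_theorem
  have hreg : P + ε • (1 : Matrix n n 𝕜) = Φ (diagonal fun i => RCLike.ofReal (lam i + ε)) := by
    have hscalar : ε • (1 : Matrix n n 𝕜) = Φ ((ε : 𝕜) • 1) := by
      rw [map_smul, map_one, RCLike.real_smul_eq_coe_smul (K := 𝕜)]
    rw [hscalar, hP_diag, ← map_add, smul_one_eq_diagonal, diagonal_add]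
    simp only [RCLike.ofReal_add]
  have hfactor : P = (P + ε • (1 : Matrix n n 𝕜)) *
      Φ (diagonal fun i => RCLike.ofReal (lam i / (lam i + ε))) := by
    rw [hreg, ← map_mul, diagonal_mul_diagonal]
    simp only [← RCLike.ofReal_mul]
    convert hP_diag using 5 with i
    have : 0 ≤ lam i := hP.eigenvalues_nonneg i
    exact mul_div_cancel₀ _ (by positivity)
  calc (P + ε • (1 : Matrix n n 𝕜))⁻¹ * P
      = (P + ε • (1 : Matrix n n 𝕜))⁻¹ * ((P + ε • (1 : Matrix n n 𝕜)) *
          Φ (diagonal fun i => RCLike.ofReal (lam i / (lam i + ε)))) := congrArg _ hfactor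
    _ = Φ (diagonal fun i => RCLike.ofReal (lam i / (lam i + ε))) :=
      nonsing_inv_mul_cancel_left _ _ (isUnit_det_add_smul_one hP hε)

theorem exists_tendsto_inv_add_smul_one_mul_self {P : Matrix n n 𝕜} (hP : P.PosSemidef) :
    ∃ Q, Tendsto (fun ε : ℝ => (P + ε • (1 : Matrix n n 𝕜))⁻¹ * P) (𝓝[>] 0) (𝓝 Q) := by
  -- For `c = 0` the limit is `0`, which `c / c` denotes by the convention `0 / 0 = 0`.
  have hcoeff (c : ℝ) : Tendsto (fun ε => c / (c + ε)) (𝓝[>] 0) (𝓝 (c / c)) := by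
    rcases eq_or_ne c 0 with rfl | hc
    · simp
    · have : ContinuousAt (fun ε => c / (c + ε)) 0 := by fun_prop (disch := simpa)
      simpa using this.tendsto.mono_left nhdsWithin_le_nhds
  have hdiag := ((continuous_id (X := n → 𝕜)).matrix_diagonal.tendsto _).comp
    (tendsto_pi_nhds.2 fun i =>
      (RCLike.continuous_ofReal.tendsto _).comp (hcoeff (hP.isHermitian.eigenvalues i)))
  have hconj : Continuous fun B : Matrix n n 𝕜 =>
      Unitary.conjStarAlgAut 𝕜 _ hP.isHermitian.eigenvectorUnitary B := by
    simp only [Unitary.conjStarAlgAut_apply]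
    fun_prop
  exact ⟨_, ((hconj.tendsto _).comp hdiag).congr' <| eventually_mem_nhdsWithin.mono
    fun ε hε => (inv_add_smul_one_mul_self_eq_conj_diagonal hP hε).symm⟩

theorem exists_tendsto_inv_add_smul_one_mulVec {P : Matrix n n 𝕜} (hP : P.PosSemidef) {g : n → 𝕜}
    (hg : g ∈ LinearMap.range P.mulVecLin) :
    ∃ z, Tendsto (fun ε : ℝ => (P + ε • (1 : Matrix n n 𝕜))⁻¹ *ᵥ g) (𝓝[>] 0) (𝓝 z) := by
  obtain ⟨v, rfl⟩ := hg
  obtain ⟨Q, hQ⟩ := exists_tendsto_inv_add_smul_one_mul_self hP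
  have hcont : Continuous fun B : Matrix n n 𝕜 => B *ᵥ v := by fun_prop
  refine ⟨Q *ᵥ v, ((hcont.tendsto Q).comp hQ).congr fun ε => ?_⟩
  rw [Function.comp_apply, mulVecLin_apply, mulVec_mulVec]

theorem mulVec_eq_of_tendsto_inv_add_smul_one_mulVec {P : Matrix n n 𝕜} (hP : P.PosSemidef)
    {g z : n → 𝕜}
    (hz : Tendsto (fun ε : ℝ => (P + ε • (1 : Matrix n n 𝕜))⁻¹ *ᵥ g) (𝓝[>] 0) (𝓝 z)) :
    P *ᵥ z = g := by
  set y := fun ε : ℝ => (P + ε • (1 : Matrix n n 𝕜))⁻¹ *ᵥ g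
  have hregularized : ∀ᶠ ε in 𝓝[>] 0, P *ᵥ y ε + ε • y ε = g :=
    eventually_mem_nhdsWithin.mono fun ε hε => by
      have hsolve : (P + ε • (1 : Matrix n n 𝕜)) *ᵥ y ε = g := by
        rw [mulVec_mulVec, mul_nonsing_inv _ (isUnit_det_add_smul_one hP hε), one_mulVec]
      rwa [add_mulVec, smul_mulVec, one_mulVec] at hsolve
  have hP_lim : Tendsto (fun ε => P *ᵥ y ε) (𝓝[>] 0) (𝓝 (P *ᵥ z)) :=
    ((show Continuous fun x => P *ᵥ x by fun_prop).tendsto z).comp hz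
  have hε_lim : Tendsto (fun ε => ε • y ε) (𝓝[>] 0) (𝓝 0) := by
    simpa using (tendsto_id.mono_left nhdsWithin_le_nhds).smul hz
  have hsum_lim : Tendsto (fun ε => P *ᵥ y ε + ε • y ε) (𝓝[>] 0) (𝓝 (P *ᵥ z)) := by
    simpa using hP_lim.add hε_lim
  exact tendsto_nhds_unique_of_eventuallyEq hsum_lim tendsto_const_nhds hregularized

end RegularizedInverse

section MeasurableSelection

variable {Ω 𝕜 m n : Type*} [MeasurableSpace Ω] [RCLike 𝕜] [Fintype n]

theorem measurable_mulVec {A : Ω → Matrix m n 𝕜} (hA : ∀ i j, Measurable fun t => A t i j)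
    {f : Ω → n → 𝕜} (hf : Measurable f) : Measurable fun t => A t *ᵥ f t :=
  measurable_pi_iff.2 fun i =>
    Finset.measurable_fun_sum _ fun j _ => (hA i j).mul (measurable_pi_iff.1 hf j)

theorem measurable_matrix_inv [DecidableEq n] {A : Ω → Matrix n n 𝕜}
    (hA : ∀ i j, Measurable fun t => A t i j) (i j : n) : Measurable fun t => (A t)⁻¹ i j := by
  have hdet : Continuous fun B : n → n → 𝕜 => (of B).det := by fun_prop
  have hadj : Continuous fun B : n → n → 𝕜 => (of B).adjugate i j := by fun_prop
  have hA' : Measurable fun t i j => A t i j :=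
    measurable_pi_iff.2 fun i => measurable_pi_iff.2 fun j => hA i j
  simp only [inv_def, Ring.inverse_eq_inv', Matrix.smul_apply, smul_eq_mul]
  exact (hdet.measurable.comp hA').inv.mul (hadj.measurable.comp hA')

theorem exists_measurable_mulVec_ae_eq [Finite m] {μ : Measure Ω} {A : Ω → Matrix m n 𝕜}
    (hA : ∀ i j, Measurable fun t => A t i j) {g : Ω → m → 𝕜} (hg : Measurable g)
    (hrange : ∀ᵐ t ∂μ, g t ∈ LinearMap.range (A t).mulVecLin) :
    ∃ f : Ω → n → 𝕜, Measurable f ∧ ∀ᵐ t ∂μ, A t *ᵥ f t = g t := by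
  classical
  have := Fintype.ofFinite m
  let P t := A t * (A t)ᴴ
  have hP t : (P t).PosSemidef := posSemidef_self_mul_conjTranspose (A t)
  have hAstar i j : Measurable fun t => (A t)ᴴ i j := continuous_star.measurable.comp (hA j i)
  have hPmeas i j : Measurable fun t => P t i j :=
    Finset.measurable_fun_sum _ fun k _ => (hA i k).mul (hAstar k j)
  have hregularized (ε : ℝ) : Measurable fun t => (P t + ε • (1 : Matrix m m 𝕜))⁻¹ *ᵥ g t :=
    measurable_mulVec (measurable_matrix_inv fun i j => (hPmeas i j).add_const _) hg
  obtain ⟨z, hz, hlim⟩ := measurable_limit_of_tendsto_metrizable_ae (L := 𝓝[>] 0)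
    (fun ε => (hregularized ε).aemeasurable) <| hrange.mono fun t ht =>
      exists_tendsto_inv_add_smul_one_mulVec (hP t)
        ((range_mulVecLin_self_mul_conjTranspose (A t)).ge ht)
  refine ⟨fun t => (A t)ᴴ *ᵥ z t, measurable_mulVec hAstar hz, ?_⟩
  filter_upwards [hlim] with t ht
  rw [mulVec_mulVec]
  exact mulVec_eq_of_tendsto_inv_add_smul_one_mulVec (hP t) ht

end MeasurableSelection

section LpSpace

variable {Ω E : Type*} [MeasurableSpace Ω] {μ : Measure Ω} [NormedAddCommGroup E]

theorem norm_toLp_two_sq {f : Ω → E} (hf : MemLp f 2 μ) : ‖hf.toLp f‖ ^ 2 = ∫ t, ‖f t‖ ^ 2 ∂μ := by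
  rw [Lp.norm_toLp, hf.eLpNorm_eq_integral_rpow_norm two_ne_zero ENNReal.ofNat_ne_top]
  have hint : 0 ≤ ∫ t, ‖f t‖ ^ 2 ∂μ := integral_nonneg fun t => sq_nonneg _
  simp only [ENNReal.toReal_ofNat, Real.rpow_ofNat]
  rw [ENNReal.toReal_ofReal (Real.rpow_nonneg hint _), ← Real.rpow_natCast, Nat.cast_ofNat,
    Real.rpow_inv_rpow hint two_ne_zero]

theorem isClosed_setOf_ae_mem {p : ENNReal} [Fact (1 ≤ p)] {C : Ω → Set E}
    (hC : ∀ t, IsClosed (C t)) : IsClosed {g : Lp E p μ | ∀ᵐ t ∂μ, g t ∈ C t} := by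
  refine IsSeqClosed.isClosed fun g g₀ hg hlim => ?_
  obtain ⟨φ, -, hφ⟩ := (tendstoInMeasure_of_tendsto_Lp hlim).exists_seq_tendsto_ae
  filter_upwards [hφ, ae_all_iff.2 hg] with t ht hmem
  exact (hC t).mem_of_tendsto ht (Eventually.of_forall fun k => hmem (φ k))

end LpSpace

section L2M

variable {Ω ι κ 𝕜 : Type*} [RCLike 𝕜] [Fintype κ] {d : ℕ} {D : Ω → Matrix (Fin d) (Fin d) ℂ}

/-- The field `t ↦ A t f t`, with values in Euclidean space so that the norm of `Lp _ 2 μ` is the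
one of `(L²(μ))^ι`. For `A = √D` it represents `F̂ f`. -/
def mulVecField (A : Ω → Matrix ι κ 𝕜) (f : Ω → κ → 𝕜) : Ω → EuclideanSpace 𝕜 ι :=
  fun t => WithLp.toLp 2 (A t *ᵥ f t)

theorem quadForm_eq_norm_mulVecField_sq [Fintype ι] {A : Ω → Matrix ι (Fin d) ℂ}
    (hAD : ∀ t, (A t)ᴴ * A t = D t) (f : Ω → Fin d → ℂ) (t : Ω) :
    (star (f t) ⬝ᵥ (D t *ᵥ f t)).re = ‖mulVecField A f t‖ ^ 2 := by
  rw [EuclideanSpace.norm_sq_eq, ← hAD]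
  exact re_star_dotProduct_conjTranspose_mul_self_mulVec (A t) (f t)

variable [MeasurableSpace Ω]

theorem measurable_mulVecField {A : Ω → Matrix ι κ 𝕜} (hA : ∀ i j, Measurable fun t => A t i j)
    {f : Ω → κ → 𝕜} (hf : Measurable f) : Measurable (mulVecField A f) :=
  (WithLp.measurable_toLp 2 _).comp (measurable_mulVec hA hf)

variable [Fintype ι]

/-- The subspace of `(L²(μ))^ι` of the classes `[g]` with `g t ∈ Ran (A t)` for `μ`-a.e. `t`.
For `A = √D` it is the space `L²_D`, since `Ran √(D t) = Ran (D t)`. -/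
def L2Range (μ : Measure Ω) (A : Ω → Matrix ι κ 𝕜) :
    Submodule 𝕜 (Lp (EuclideanSpace 𝕜 ι) 2 μ) where
  carrier := {g | ∀ᵐ t ∂μ, (g t).ofLp ∈ LinearMap.range (A t).mulVecLin}
  zero_mem' := by
    filter_upwards [Lp.coeFn_zero (EuclideanSpace 𝕜 ι) 2 μ] with t ht
    rw [ht]
    exact zero_mem _
  add_mem' {g h} hg hh := by
    filter_upwards [hg, hh, Lp.coeFn_add g h] with t hgt hht ht
    rw [ht]
    exact add_mem hgt hht
  smul_mem' c g hg := by
    filter_upwards [hg, Lp.coeFn_smul c g] with t hgt ht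
    rw [ht]
    exact Submodule.smul_mem _ c hgt

variable {μ : Measure Ω}

theorem isClosed_L2Range (A : Ω → Matrix ι κ 𝕜) :
    IsClosed (L2Range μ A : Set (Lp (EuclideanSpace 𝕜 ι) 2 μ)) :=
  isClosed_setOf_ae_mem fun t =>
    (LinearMap.range (A t).mulVecLin).closed_of_finiteDimensional.preimage
      (PiLp.continuous_ofLp 2 _)

theorem toLp_mulVecField_mem_L2Range {A : Ω → Matrix ι κ 𝕜} {f : Ω → κ → 𝕜}
    (hf : MemLp (mulVecField A f) 2 μ) : hf.toLp ∈ L2Range μ A := by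
  filter_upwards [hf.coeFn_toLp] with t ht
  rw [ht]
  exact ⟨f t, rfl⟩

theorem exists_toLp_mulVecField_eq_of_mem_L2Range {A : Ω → Matrix ι κ 𝕜}
    (hA : ∀ i j, Measurable fun t => A t i j) {g : Lp (EuclideanSpace 𝕜 ι) 2 μ}
    (hg : g ∈ L2Range μ A) :
    ∃ f, Measurable f ∧ ∃ hf : MemLp (mulVecField A f) 2 μ, hf.toLp = g := by
  have hg_meas : Measurable fun t => (g t).ofLp :=
    (WithLp.measurable_ofLp 2 _).comp (Lp.stronglyMeasurable g).measurable
  obtain ⟨f, hf, hfg⟩ := exists_measurable_mulVec_ae_eq hA hg_meas hg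
  have hae : mulVecField A f =ᵐ[μ] g := by
    filter_upwards [hfg] with t ht
    exact congrArg (WithLp.toLp 2) ht
  have hfLp : MemLp (mulVecField A f) 2 μ := (memLp_congr_ae hae).2 (Lp.memLp g)
  exact ⟨f, hf, hfLp, Lp.ext (hfLp.coeFn_toLp.trans hae)⟩

variable {A : Ω → Matrix ι (Fin d) ℂ}

theorem memL2M_iff_memLp_mulVecField (hAD : ∀ t, (A t)ᴴ * A t = D t)
    (hA : ∀ i j, Measurable fun t => A t i j) {f : Ω → Fin d → ℂ} (hf : Measurable f) :
    MemL2M μ D f ↔ MemLp (mulVecField A f) 2 μ := by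
  rw [memLp_two_iff_integrable_sq_norm (measurable_mulVecField hA hf).aestronglyMeasurable, MemL2M,
    and_iff_right hf]
  simp only [quadForm_eq_norm_mulVecField_sq hAD]

theorem quadInt_eq_norm_toLp_sq (hAD : ∀ t, (A t)ᴴ * A t = D t) {f : Ω → Fin d → ℂ}
    (hf : MemLp (mulVecField A f) 2 μ) : quadInt μ D f = ‖hf.toLp‖ ^ 2 := by
  simp only [quadInt, quadForm_eq_norm_mulVecField_sq hAD, norm_toLp_two_sq]

theorem quadInt_eq_zero_iff (hAD : ∀ t, (A t)ᴴ * A t = D t) {f : Ω → Fin d → ℂ}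
    (hf : MemLp (mulVecField A f) 2 μ) : quadInt μ D f = 0 ↔ ∀ᵐ t ∂μ, A t *ᵥ f t = 0 := by
  rw [quadInt_eq_norm_toLp_sq hAD hf, sq_eq_zero_iff, norm_eq_zero,
    Lp.eq_zero_iff_ae_eq_zero]
  refine eventually_congr (hf.coeFn_toLp.mono fun t ht => ?_)
  rw [ht, Pi.zero_apply, mulVecField, WithLp.toLp_eq_zero]

theorem quadInt_sub_eq_dist_toLp_sq (hAD : ∀ t, (A t)ᴴ * A t = D t) {f g : Ω → Fin d → ℂ}
    (hf : MemLp (mulVecField A f) 2 μ) (hg : MemLp (mulVecField A g) 2 μ) :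
    quadInt μ D (fun t => f t - g t) = dist hf.toLp hg.toLp ^ 2 := by
  have hsub : mulVecField A (fun t => f t - g t) = mulVecField A f - mulVecField A g :=
    funext fun t => congrArg (WithLp.toLp 2) (mulVec_sub (A t) (f t) (g t))
  have hfg : MemLp (mulVecField A fun t => f t - g t) 2 μ := hsub ▸ hf.sub hg
  rw [quadInt_eq_norm_toLp_sq hAD hfg, dist_eq_norm, ← MemLp.toLp_sub]
  simp only [hsub]

theorem exists_memL2M_mulVec_ae_eq (hAD : ∀ t, (A t)ᴴ * A t = D t)
    (hA : ∀ i j, Measurable fun t => A t i j) {g : Ω → ι → ℂ} (hg : Measurable g)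
    (hg_int : Integrable (fun t => ∑ i, ‖g t i‖ ^ 2) μ)
    (hrange : ∀ᵐ t ∂μ, g t ∈ LinearMap.range (A t).mulVecLin) :
    ∃ f, MemL2M μ D f ∧ ∀ᵐ t ∂μ, A t *ᵥ f t = g t := by
  obtain ⟨f, hf, hfg⟩ := exists_measurable_mulVec_ae_eq hA hg hrange
  refine ⟨f, ⟨hf, hg_int.congr ?_⟩, hfg⟩
  filter_upwards [hfg] with t ht
  rw [quadForm_eq_norm_mulVecField_sq hAD, EuclideanSpace.norm_sq_eq, mulVecField, ht]

theorem exists_memL2M_tendsto_of_cauchy (hAD : ∀ t, (A t)ᴴ * A t = D t)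
    (hA : ∀ i j, Measurable fun t => A t i j) {F : ℕ → Ω → Fin d → ℂ}
    (hF : ∀ n, MemL2M μ D (F n))
    (hcauchy : ∀ ε : ℝ, 0 < ε → ∃ N : ℕ, ∀ m ≥ N, ∀ n ≥ N,
      quadInt μ D (fun t => F m t - F n t) < ε) :
    ∃ f, MemL2M μ D f ∧
      Tendsto (fun n => quadInt μ D (fun t => F n t - f t)) atTop (𝓝 0) := by
  have hFLp n : MemLp (mulVecField A (F n)) 2 μ :=
    (memL2M_iff_memLp_mulVecField hAD hA (hF n).1).1 (hF n)
  have image_cauchy : CauchySeq fun n => (hFLp n).toLp := Metric.cauchySeq_iff.2 fun ε hε => by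
    obtain ⟨N, hN⟩ := hcauchy (ε ^ 2) (by positivity)
    refine ⟨N, fun m hm n hn => lt_of_pow_lt_pow_left₀ 2 hε.le ?_⟩
    rw [← quadInt_sub_eq_dist_toLp_sq hAD]
    exact hN m hm n hn
  obtain ⟨p, hp⟩ := cauchySeq_tendsto_of_complete image_cauchy
  have hp_mem : p ∈ L2Range μ A := (isClosed_L2Range A).mem_of_tendsto hp
    (Eventually.of_forall fun n => toLp_mulVecField_mem_L2Range (hFLp n))
  obtain ⟨f, hf, hfLp, rfl⟩ := exists_toLp_mulVecField_eq_of_mem_L2Range hA hp_mem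
  refine ⟨f, (memL2M_iff_memLp_mulVecField hAD hA hf).2 hfLp, ?_⟩
  simp only [quadInt_sub_eq_dist_toLp_sq hAD (hFLp _) hfLp]
  simpa using (tendsto_iff_dist_tendsto_zero.1 hp).pow 2

end L2M

theorem L2M_unitary_to_L2D_and_complete_general
    {Ω : Type*} [MeasurableSpace Ω] {d : ℕ} (μ : Measure Ω)
    (D sD : Ω → Matrix (Fin d) (Fin d) ℂ)
    (hsDmeas : ∀ i j, Measurable fun t => sD t i j)
    (hsD : ∀ t, (sD t).PosSemidef ∧ sD t * sD t = D t) :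
    (∀ (t : Ω) (x : Fin d → ℂ),
      (star x ⬝ᵥ ((D t) *ᵥ x)).re = ∑ i, ‖((sD t) *ᵥ x) i‖ ^ 2) ∧
    (∀ f : Ω → Fin d → ℂ, MemL2M μ D f →
      (quadInt μ D f = 0 ↔ ∀ᵐ t ∂μ, (sD t) *ᵥ f t = 0)) ∧
    (∀ (t : Ω) (x : Fin d → ℂ), ∃ v : Fin d → ℂ, (D t) *ᵥ v = (sD t) *ᵥ x) ∧
    (∀ g : Ω → Fin d → ℂ, Measurable g →
      Integrable (fun t => ∑ i, ‖g t i‖ ^ 2) μ →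
      (∀ᵐ t ∂μ, ∃ v : Fin d → ℂ, (D t) *ᵥ v = g t) →
      ∃ f : Ω → Fin d → ℂ, MemL2M μ D f ∧ ∀ᵐ t ∂μ, (sD t) *ᵥ f t = g t) ∧
    (∀ F : ℕ → Ω → Fin d → ℂ, (∀ n, MemL2M μ D (F n)) →
      (∀ ε : ℝ, 0 < ε → ∃ N : ℕ, ∀ m ≥ N, ∀ n ≥ N,
        quadInt μ D (fun t => F m t - F n t) < ε) →
      ∃ f : Ω → Fin d → ℂ, MemL2M μ D f ∧
        Tendsto (fun n => quadInt μ D (fun t => F n t - f t)) atTop (𝓝 0)) := by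
  have hAD t : (sD t)ᴴ * sD t = D t := by rw [(hsD t).1.isHermitian.eq, (hsD t).2]
  have hrange t : LinearMap.range (D t).mulVecLin = LinearMap.range (sD t).mulVecLin := by
    rw [← range_mulVecLin_self_mul_conjTranspose (sD t), (hsD t).1.isHermitian.eq, (hsD t).2]
  refine ⟨fun t x => ?_, fun f hf => ?_, fun t x => ?_, fun g hg hg_int hg_range => ?_,
    fun F hF hcauchy => exists_memL2M_tendsto_of_cauchy hAD hsDmeas hF hcauchy⟩
  · rw [← hAD]
    exact re_star_dotProduct_conjTranspose_mul_self_mulVec (sD t) x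
  · exact quadInt_eq_zero_iff hAD ((memL2M_iff_memLp_mulVecField hAD hsDmeas hf.1).1 hf)
  · exact (hrange t).ge ⟨x, rfl⟩
  · exact exists_memL2M_mulVec_ae_eq hAD hsDmeas hg hg_int
      (hg_range.mono fun t ht => (hrange t).le ht)

/-- For a matrix measure `M` with trace measure `μ = tr_M` and density
`D = D_M ≥ 0`, the map `f ↦ √D · f` induces a well-defined linear isometry from `L²(M)`
onto the closed subspace `L²_D = {g ∈ (L²(μ))^d : g t ∈ Ran (D t) a.e.}`; in particular
`L²(M)` is complete. Here `sD` denotes the pointwise nonnegative square root of `D`. -/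
theorem L2M_unitary_to_L2D_and_complete
    {Ω : Type*} [MeasurableSpace Ω] {d : ℕ}
    (M : Set Ω → Matrix (Fin d) (Fin d) ℂ)
    (μ : Measure Ω) [IsFiniteMeasure μ]
    (D : Ω → Matrix (Fin d) (Fin d) ℂ)
    (hpos : ∀ ω : Set Ω, MeasurableSet ω → (M ω).PosSemidef)
    (hμ : ∀ ω : Set Ω, MeasurableSet ω → (M ω).trace = ((μ ω).toReal : ℂ))
    (hDmeas : ∀ i j, Measurable fun t => D t i j)
    (hDpos : ∀ t, (D t).PosSemidef)
    (hden : ∀ ω : Set Ω, MeasurableSet ω → ∀ i j, M ω i j = ∫ t in ω, D t i j ∂μ)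
    -- `sD` is the pointwise nonnegative square root of `D`
    (sD : Ω → Matrix (Fin d) (Fin d) ℂ)
    (hsDmeas : ∀ i j, Measurable fun t => sD t i j)
    (hsD : ∀ t, (sD t).PosSemidef ∧ sD t * sD t = D t) :
    -- (isometry, pointwise): ⟨D t x, x⟩ = ‖√(D t) x‖² , hence ⟨⟨f⟩⟩_M = ‖√D f‖²_{(L²(μ))^d}
    (∀ (t : Ω) (x : Fin d → ℂ),
      (star x ⬝ᵥ ((D t) *ᵥ x)).re = ∑ i, ‖((sD t) *ᵥ x) i‖ ^ 2) ∧
    -- (well-defined & injective): the zero layer corresponds exactly to √D f = 0 a.e.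
    (∀ f : Ω → Fin d → ℂ, MemL2M μ D f →
      (quadInt μ D f = 0 ↔ ∀ᵐ t ∂μ, (sD t) *ᵥ f t = 0)) ∧
    -- the image lies in L²_D: √(D t) f t ∈ Ran (D t)
    (∀ (t : Ω) (x : Fin d → ℂ), ∃ v : Fin d → ℂ, (D t) *ᵥ v = (sD t) *ᵥ x) ∧
    -- (surjectivity onto L²_D)
    (∀ g : Ω → Fin d → ℂ, Measurable g →
      Integrable (fun t => ∑ i, ‖g t i‖ ^ 2) μ →
      (∀ᵐ t ∂μ, ∃ v : Fin d → ℂ, (D t) *ᵥ v = g t) →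
      ∃ f : Ω → Fin d → ℂ, MemL2M μ D f ∧ ∀ᵐ t ∂μ, (sD t) *ᵥ f t = g t) ∧
    -- (completeness of L²(M)): every Cauchy sequence for the seminorm converges
    (∀ F : ℕ → Ω → Fin d → ℂ, (∀ n, MemL2M μ D (F n)) →
      (∀ ε : ℝ, 0 < ε → ∃ N : ℕ, ∀ m ≥ N, ∀ n ≥ N,
        quadInt μ D (fun t => F m t - F n t) < ε) →
      ∃ f : Ω → Fin d → ℂ, MemL2M μ D f ∧
        Tendsto (fun n => quadInt μ D (fun t => F n t - f t)) atTop (nhds 0)) := by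
  exact L2M_unitary_to_L2D_and_complete_general μ D sD hsDmeas hsD
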